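/- Assume h ≥ 0 on [0,1] and H > 0 on (0,1]. Let u be a solution of the traveling-wave problem with speed c > 0, and suppose there exist β ∈ ℝ, γ > 0 and positive finite limits lim_{v→1−} D(v)/(1−v)^β and lim_{v→1−} g(v)/(1−v)^γ, with −1 < γ + β/(p−1) ≤ 1/(p−1). If (γ − β + 1)/p < 1, then u attains the value 1, i.e., there exists ξ ∈ ℝ with u(ξ) = 1. If (γ − β + 1)/p ≥ 1, then u(ξ) < 1 for all ξ ∈ ℝ. -/

import Mathlib

open Set MeasureTheory Filter

/-- The conjugate exponent `p' = p/(p-1)`. -/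
noncomputable def pconj (p : ℝ) : ℝ := p / (p - 1)

/-- The constant `k(p)` from the paper. -/
noncomputable def kfun (p : ℝ) : ℝ :=
  if p < 2 then 1 / (2 ^ (pconj p - 1) - 1)
  else if p = 2 then 1
  else pconj p / (pconj p - 1 +
    (1 + pconj p * (pconj p - 1) ^ ((1 : ℝ) / (pconj p - 2)) +
      (pconj p - 1) ^ (pconj p / (pconj p - 2))) /
    (1 + (pconj p - 1) ^ ((1 : ℝ) / (pconj p - 2))) ^ pconj p)

/-- Standing assumptions on the data `p, θ, D, H, h, g` (combustion setting). -/
structure CombSetup (p θ : ℝ) (D H h g : ℝ → ℝ) : Prop where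
  hp : 1 < p
  hθ0 : 0 < θ
  hθ1 : θ < 1
  hD : ContDiffOn ℝ 1 D (Ioo 0 1)
  hDpos : ∀ v ∈ Ioo (0 : ℝ) 1, 0 < D v
  hH : ContDiffOn ℝ 1 H (Icc 0 1)
  hH0 : H 0 = 0
  hh : ContinuousOn h (Icc 0 1)
  hHd : ∀ v ∈ Icc (0 : ℝ) 1, HasDerivWithinAt H (h v) (Icc 0 1) v
  hgc : ContinuousOn g (Icc 0 1)
  hg0 : ∀ v ∈ Icc (0 : ℝ) θ, g v = 0
  hgpos : ∀ v ∈ Ioo θ 1, 0 < g v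
  hg1 : g 1 = 0
  hInt : IntegrableOn (fun v => D v ^ (pconj p - 1) * g v) (Ioo 0 1)

/-- The diffusive flux `ξ ↦ D(u(ξ)) |u'(ξ)|^{p-2} u'(ξ)`. -/
noncomputable def flux (p : ℝ) (D u : ℝ → ℝ) : ℝ → ℝ :=
  fun ξ => D (u ξ) * (|deriv u ξ| ^ (p - 2) * deriv u ξ)

/-- Solution of the traveling-wave problem with speed `c`. -/
structure IsTWSol (p c : ℝ) (D h g : ℝ → ℝ) (u : ℝ → ℝ) : Prop where
  cont : Continuous u
  mem : ∀ ξ, u ξ ∈ Icc (0 : ℝ) 1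
  smooth : ContDiffOn ℝ 1 u {ξ | u ξ ∈ Ioo (0 : ℝ) 1}
  eqn : ∀ ξ ∈ {ξ | u ξ ∈ Ioo (0 : ℝ) 1},
    HasDerivAt (flux p D u) (-(c + h (u ξ)) * deriv u ξ - g (u ξ)) ξ
  flux_cont : Continuous (fun ξ => if u ξ ∈ Ioo (0 : ℝ) 1 then flux p D u ξ else 0)
  flux_to0 : ∀ ε > 0, ∃ δ > 0, ∀ ξ, u ξ ∈ Ioo (0 : ℝ) 1 → u ξ < δ → |flux p D u ξ| < ε
  flux_to1 : ∀ ε > 0, ∃ δ > 0, ∀ ξ, u ξ ∈ Ioo (0 : ℝ) 1 → 1 - δ < u ξ → |flux p D u ξ| < ε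
  lim_bot : Tendsto u atBot (nhds 1)
  lim_top : Tendsto u atTop (nhds 0)

/-- Positive solution of the first-order problem with parameter `c`. -/
structure IsFOSol (p c : ℝ) (D h g : ℝ → ℝ) (y : ℝ → ℝ) : Prop where
  cont : ContinuousOn y (Icc 0 1)
  eqn : ∀ v ∈ Ioo (0 : ℝ) 1, HasDerivAt y
    (pconj p * ((c + h v) * (max (y v) 0) ^ (1 / p) - D v ^ (pconj p - 1) * g v)) v
  y0 : y 0 = 0
  y1 : y 1 = 0
  pos : ∀ v ∈ Ioo (0 : ℝ) 1, 0 < y v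

/-- A function asymptotic to `L (1 - v) ^ β` as `v → 1⁻` lies between two multiples of
`(1 - v) ^ β` near `1`. -/
theorem eventually_two_sided_rpow_bound {f : ℝ → ℝ} {β L : ℝ} (hL : 0 < L)
    (hf : Tendsto (fun v => f v / (1 - v) ^ β) (nhdsWithin 1 (Iio (1 : ℝ))) (nhds L)) :
    ∀ᶠ v in nhdsWithin 1 (Iio (1 : ℝ)),
      L / 2 * (1 - v) ^ β ≤ f v ∧ f v ≤ 2 * L * (1 - v) ^ β := by
  have h := hf.eventually (Icc_mem_nhds (show L / 2 < L by linarith) (show L < 2 * L by linarith))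
  filter_upwards [h, self_mem_nhdsWithin] with v hv hv1
  have hpos : 0 < (1 - v) ^ β := Real.rpow_pos_of_pos (sub_pos.2 hv1) β
  exact ⟨(le_div_iff₀ hpos).1 hv.1, (div_le_iff₀ hpos).1 hv.2⟩

/-- The degenerate first-order system for `s = 1 - u` and `z = -D(u)|u'|^{p-2}u'` cannot leave
`(0, 0)` at a finite time if `p ≤ γ - β + 1`. -/
theorem not_departure_at_finite_time {p β γ a b L₁ L₂ M : ℝ} {s z s' d G κ : ℝ → ℝ}
    (hp : 1 < p) (hab : a < b) (hL₁ : 0 < L₁) (hM : 0 < M)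
    (hm : -1 < γ + β / (p - 1)) (hσ : p ≤ γ - β + 1)
    (hsc : ContinuousOn s (Icc a b)) (hzc : ContinuousOn z (Icc a b))
    (hsa : s a = 0) (hza : z a = 0)
    (hs : ∀ ξ ∈ Ioo a b, HasDerivAt s (s' ξ) ξ)
    (hs0 : ∀ ξ ∈ Ioo a b, 0 < s ξ) (hs1 : ∀ ξ ∈ Ioo a b, s ξ ≤ 1)
    (hs'0 : ∀ ξ ∈ Ioo a b, 0 < s' ξ)
    (hz : ∀ ξ ∈ Ioo a b, z ξ = d ξ * s' ξ ^ (p - 1))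
    (hz' : ∀ ξ ∈ Ioo a b, HasDerivAt z (-κ ξ * s' ξ + G ξ) ξ)
    (hκ : ∀ ξ ∈ Ioo a b, 0 ≤ κ ξ)
    (hd₁ : ∀ ξ ∈ Ioo a b, L₁ * s ξ ^ β ≤ d ξ)
    (hd₂ : ∀ ξ ∈ Ioo a b, d ξ ≤ L₂ * s ξ ^ β)
    (hG0 : ∀ ξ ∈ Ioo a b, 0 ≤ G ξ)
    (hG : ∀ ξ ∈ Ioo a b, G ξ ≤ M * s ξ ^ γ) : False := by
  have hp1 : 0 < p - 1 := by linarith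
  have hp0 : 0 < p := by linarith
  set q := 1 / (p - 1) with hq
  have hq0 : 0 < q := by positivity
  have hpq : (p - 1) * q = 1 := by rw [hq]; field_simp
  set m := γ + β * q with hmdef
  have hm' : -1 < m := by rwa [hmdef, hq, mul_one_div]
  have hd0 : ∀ ξ ∈ Ioo a b, 0 < d ξ := fun ξ hξ =>
    lt_of_lt_of_le (mul_pos hL₁ (Real.rpow_pos_of_pos (hs0 ξ hξ) β)) (hd₁ ξ hξ)
  have hmid : (a + b) / 2 ∈ Ioo a b := ⟨by linarith, by linarith⟩
  have hL₂ : 0 < L₂ := by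
    have h1 := (hd0 _ hmid).trans_le (hd₂ _ hmid)
    exact pos_of_mul_pos_left h1 (Real.rpow_pos_of_pos (hs0 _ hmid) β).le
  have hz0 : ∀ ξ ∈ Ioo a b, 0 < z ξ := fun ξ hξ => by
    rw [hz ξ hξ]
    exact mul_pos (hd0 ξ hξ) (Real.rpow_pos_of_pos (hs'0 ξ hξ) _)
  have hzq : ∀ ξ ∈ Ioo a b, z ξ ^ q = d ξ ^ q * s' ξ := fun ξ hξ => by
    rw [hz ξ hξ, Real.mul_rpow (hd0 ξ hξ).le (Real.rpow_nonneg (hs'0 ξ hξ).le _),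
      ← Real.rpow_mul (hs'0 ξ hξ).le, hpq, Real.rpow_one]
  set C := (1 + q) * (M * L₂ ^ q) / (m + 1) with hC
  have hC0 : 0 < C := by
    have : 0 < m + 1 := by linarith
    have := Real.rpow_pos_of_pos hL₂ q
    positivity
  have hzle : ∀ ξ ∈ Ioo a b, z ξ ^ (1 + q) ≤ C * s ξ ^ (m + 1) := by
    have hanti : AntitoneOn (fun ξ => z ξ ^ (1 + q) - C * s ξ ^ (m + 1)) (Icc a b) := by
      apply antitoneOn_of_hasDerivWithinAt_nonpos (convex_Icc a b)
        (f' := fun ξ => (-κ ξ * s' ξ + G ξ) * (1 + q) * z ξ ^ (1 + q - 1)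
          - C * (s' ξ * (m + 1) * s ξ ^ (m + 1 - 1)))
      · exact (hzc.rpow_const fun _ _ => Or.inr (by linarith)).sub
          ((hsc.rpow_const fun _ _ => Or.inr (by linarith)).const_mul C)
      · intro ξ hξ
        rw [interior_Icc] at hξ
        exact (((hz' ξ hξ).rpow_const (Or.inl (hz0 ξ hξ).ne')).sub
          (((hs ξ hξ).rpow_const (Or.inl (hs0 ξ hξ).ne')).const_mul C)).hasDerivWithinAt
      · intro ξ hξ
        rw [interior_Icc] at hξ
        have e1 : C * (s' ξ * (m + 1) * s ξ ^ (m + 1 - 1))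
            = (1 + q) * ((M * s ξ ^ γ) * ((L₂ * s ξ ^ β) ^ q * s' ξ)) := by
          have : m + 1 ≠ 0 := by linarith
          rw [Real.mul_rpow hL₂.le (Real.rpow_nonneg (hs0 ξ hξ).le _),
            ← Real.rpow_mul (hs0 ξ hξ).le, add_sub_cancel_right, hmdef,
            Real.rpow_add (hs0 ξ hξ), ← hmdef, hC]
          field_simp
        have e2 : z ξ ^ (1 + q - 1) = d ξ ^ q * s' ξ := by
          rw [add_sub_cancel_left, hzq ξ hξ]
        rw [e1, e2]
        have i1 : d ξ ^ q * s' ξ ≤ (L₂ * s ξ ^ β) ^ q * s' ξ :=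
          mul_le_mul_of_nonneg_right
            (Real.rpow_le_rpow (hd0 ξ hξ).le (hd₂ ξ hξ) hq0.le) (hs'0 ξ hξ).le
        have i0 : 0 ≤ d ξ ^ q * s' ξ :=
          mul_nonneg (Real.rpow_nonneg (hd0 ξ hξ).le _) (hs'0 ξ hξ).le
        have i2 : G ξ * (d ξ ^ q * s' ξ) ≤ (M * s ξ ^ γ) * ((L₂ * s ξ ^ β) ^ q * s' ξ) :=
          mul_le_mul (hG ξ hξ) i1 i0 ((hG0 ξ hξ).trans (hG ξ hξ))
        have i3 : 0 ≤ κ ξ * s' ξ * (d ξ ^ q * s' ξ) :=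
          mul_nonneg (mul_nonneg (hκ ξ hξ) (hs'0 ξ hξ).le) i0
        have : (-κ ξ * s' ξ + G ξ) * (d ξ ^ q * s' ξ)
            ≤ (M * s ξ ^ γ) * ((L₂ * s ξ ^ β) ^ q * s' ξ) := by nlinarith
        nlinarith
    intro ξ hξ
    have h := hanti (left_mem_Icc.2 hab.le) (Ioo_subset_Icc_self hξ) hξ.1.le
    simp only [hsa, hza] at h
    rw [Real.zero_rpow (by linarith), Real.zero_rpow (by linarith)] at h
    linarith
  set K := (C * (L₁ ^ (1 + q))⁻¹) ^ (1 / p) with hK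
  have hlin : ∀ ξ ∈ Ioo a b, s' ξ ≤ K * s ξ := by
    intro ξ hξ
    have hsξ := hs0 ξ hξ
    have hL₁q := Real.rpow_pos_of_pos hL₁ (1 + q)
    have e1 : z ξ ^ (1 + q) = d ξ ^ (1 + q) * s' ξ ^ p := by
      rw [hz ξ hξ, Real.mul_rpow (hd0 ξ hξ).le (Real.rpow_nonneg (hs'0 ξ hξ).le _),
        ← Real.rpow_mul (hs'0 ξ hξ).le]
      congr 2
      linear_combination hpq
    have i1 : L₁ ^ (1 + q) * s ξ ^ (β * (1 + q)) ≤ d ξ ^ (1 + q) := by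
      rw [Real.rpow_mul hsξ.le, ← Real.mul_rpow hL₁.le (Real.rpow_nonneg hsξ.le _)]
      exact Real.rpow_le_rpow (by positivity) (hd₁ ξ hξ) (by linarith)
    have i2 : L₁ ^ (1 + q) * s ξ ^ (β * (1 + q)) * s' ξ ^ p ≤ C * s ξ ^ (m + 1) :=
      (mul_le_mul_of_nonneg_right i1 (Real.rpow_nonneg (hs'0 ξ hξ).le _)).trans
        (e1 ▸ hzle ξ hξ)
    have e2 : s ξ ^ (m + 1) = s ξ ^ (β * (1 + q)) * s ξ ^ (γ - β + 1) := by
      rw [← Real.rpow_add hsξ, hmdef]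
      congr 1
      ring
    have i3 : s' ξ ^ p ≤ C * (L₁ ^ (1 + q))⁻¹ * s ξ ^ p := by
      have hB := Real.rpow_pos_of_pos hsξ (β * (1 + q))
      have i4 : L₁ ^ (1 + q) * s' ξ ^ p ≤ C * s ξ ^ (γ - β + 1) := by
        rw [e2] at i2
        exact le_of_mul_le_mul_left (by linarith) hB
      have i5 : s ξ ^ (γ - β + 1) ≤ s ξ ^ p :=
        Real.rpow_le_rpow_of_exponent_ge hsξ (hs1 ξ hξ) hσ
      have i6 := i4.trans (mul_le_mul_of_nonneg_left i5 hC0.le)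
      rw [mul_comm C, mul_assoc]
      exact (le_inv_mul_iff₀ hL₁q).2 i6
    have i7 := Real.rpow_le_rpow (Real.rpow_nonneg (hs'0 ξ hξ).le _) i3
      (show 0 ≤ 1 / p by positivity)
    rwa [Real.mul_rpow (by positivity) (Real.rpow_nonneg hsξ.le _), ← Real.rpow_mul hsξ.le,
      ← Real.rpow_mul (hs'0 ξ hξ).le, mul_one_div_cancel hp0.ne', Real.rpow_one,
      Real.rpow_one] at i7
  have hanti : AntitoneOn (fun ξ => s ξ * Real.exp (-K * ξ)) (Icc a b) := by
    apply antitoneOn_of_hasDerivWithinAt_nonpos (convex_Icc a b)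
      (f' := fun ξ => s' ξ * Real.exp (-K * ξ) + s ξ * (Real.exp (-K * ξ) * (-K * 1)))
    · exact hsc.mul (by fun_prop)
    · intro ξ hξ
      rw [interior_Icc] at hξ
      exact ((hs ξ hξ).mul (((hasDerivAt_id ξ).const_mul (-K)).exp)).hasDerivWithinAt
    · intro ξ hξ
      rw [interior_Icc] at hξ
      have := hlin ξ hξ
      have := Real.exp_pos (-K * ξ)
      nlinarith
  have h := hanti (left_mem_Icc.2 hab.le) (Ioo_subset_Icc_self hmid) hmid.1.le
  simp only [hsa, zero_mul] at h
  exact absurd h (not_le.2 (mul_pos (hs0 _ hmid) (Real.exp_pos _)))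

/-- The degenerate first-order system for `s = 1 - u` and `z = -D(u)|u'|^{p-2}u'` cannot emanate
from `(0, 0)` at `-∞` if `γ - β + 1 < p` and `γ + β / (p - 1) ≤ 1 / (p - 1)`. -/
theorem not_departure_at_bot {p β γ b L₁ L₂ M C₀ : ℝ} {s z s' d G κ : ℝ → ℝ}
    (hp : 1 < p) (hL₁ : 0 < L₁) (hM : 0 < M)
    (hm : -1 < γ + β / (p - 1)) (hm₂ : γ + β / (p - 1) ≤ 1 / (p - 1)) (hσ : γ - β + 1 < p)
    (hsl : Tendsto s atBot (nhds 0)) (hzl : Tendsto z atBot (nhds 0))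
    (hs : ∀ ξ ∈ Iio b, HasDerivAt s (s' ξ) ξ)
    (hs0 : ∀ ξ ∈ Iio b, 0 < s ξ) (hs1 : ∀ ξ ∈ Iio b, s ξ ≤ 1)
    (hs'0 : ∀ ξ ∈ Iio b, 0 < s' ξ)
    (hz : ∀ ξ ∈ Iio b, z ξ = d ξ * s' ξ ^ (p - 1))
    (hz' : ∀ ξ ∈ Iio b, HasDerivAt z (-κ ξ * s' ξ + G ξ) ξ)
    (hC₀ : 0 ≤ C₀) (hκ : ∀ ξ ∈ Iio b, κ ξ ≤ C₀)
    (hd₁ : ∀ ξ ∈ Iio b, L₁ * s ξ ^ β ≤ d ξ)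
    (hd₂ : ∀ ξ ∈ Iio b, d ξ ≤ L₂ * s ξ ^ β)
    (hG : ∀ ξ ∈ Iio b, M * s ξ ^ γ ≤ G ξ) : False := by
  have hp1 : 0 < p - 1 := by linarith
  have hp0 : 0 < p := by linarith
  set q := 1 / (p - 1) with hq
  have hq0 : 0 < q := by positivity
  have hpq : (p - 1) * q = 1 := by rw [hq]; field_simp
  set m := γ + β * q with hmdef
  have hmeq : γ + β / (p - 1) = m := by rw [hmdef, hq, mul_one_div]
  rw [hmeq] at hm hm₂
  set α := (m + 1) / (1 + q) with hα
  have hα0 : 0 < α := div_pos (by linarith) (by linarith)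
  have hα1 : α ≤ 1 := (div_le_one (by linarith)).2 (by linarith)
  have hαm : α * (1 + q) = m + 1 := by rw [hα]; field_simp
  have hd0 : ∀ ξ ∈ Iio b, 0 < d ξ := fun ξ hξ =>
    lt_of_lt_of_le (mul_pos hL₁ (Real.rpow_pos_of_pos (hs0 ξ hξ) β)) (hd₁ ξ hξ)
  have hmid : b - 1 ∈ Iio b := by simp
  have hL₂ : 0 < L₂ := by
    have h1 := (hd0 _ hmid).trans_le (hd₂ _ hmid)
    exact pos_of_mul_pos_left h1 (Real.rpow_pos_of_pos (hs0 _ hmid) β).le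
  have hz0 : ∀ ξ ∈ Iio b, 0 < z ξ := fun ξ hξ => by
    rw [hz ξ hξ]
    exact mul_pos (hd0 ξ hξ) (Real.rpow_pos_of_pos (hs'0 ξ hξ) _)
  have hzq : ∀ ξ ∈ Iio b, z ξ ^ q = d ξ ^ q * s' ξ := fun ξ hξ => by
    rw [hz ξ hξ, Real.mul_rpow (hd0 ξ hξ).le (Real.rpow_nonneg (hs'0 ξ hξ).le _),
      ← Real.rpow_mul (hs'0 ξ hξ).le, hpq, Real.rpow_one]
  set K := M * L₁ ^ q with hK
  have hK0 : 0 < K := mul_pos hM (Real.rpow_pos_of_pos hL₁ q)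
  obtain ⟨ε, hε0, hε⟩ : ∃ ε : ℝ, 0 < ε ∧ ε * α + C₀ < K * (ε ^ q)⁻¹ := by
    set t := (α + C₀) / K + 1 with ht
    have ht1 : 1 ≤ t := by
      have : 0 ≤ (α + C₀) / K := by positivity
      linarith
    have ht0 : 0 < t := by linarith
    refine ⟨t ^ (-(p - 1)), Real.rpow_pos_of_pos ht0 _, ?_⟩
    have e1 : ((t ^ (-(p - 1))) ^ q)⁻¹ = t := by
      rw [← Real.rpow_mul ht0.le, neg_mul, hpq, Real.rpow_neg_one, inv_inv]
    have e2 : K * t = α + C₀ + K := by rw [ht]; field_simp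
    have i1 : t ^ (-(p - 1)) ≤ 1 := Real.rpow_le_one_of_one_le_of_nonpos ht1 (by linarith)
    rw [e1, e2]
    nlinarith
  have hεq := Real.rpow_pos_of_pos hε0 q
  have hy' : ∀ ξ ∈ Iio b, HasDerivAt (fun ξ => ε * s ξ ^ α - z ξ)
      (ε * (s' ξ * α * s ξ ^ (α - 1)) - (-κ ξ * s' ξ + G ξ)) ξ := fun ξ hξ =>
    (((hs ξ hξ).rpow_const (Or.inl (hs0 ξ hξ).ne')).const_mul ε).sub (hz' ξ hξ)
  have hneg : ∀ ξ ∈ Iio b, 0 < ε * s ξ ^ α - z ξ →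
      ε * (s' ξ * α * s ξ ^ (α - 1)) - (-κ ξ * s' ξ + G ξ) < 0 := by
    intro ξ hξ hy
    have hsξ := hs0 ξ hξ
    have hs'ξ := hs'0 ξ hξ
    set T := s ξ ^ (α - 1) with hT
    have hT1 : 1 ≤ T :=
      Real.one_le_rpow_of_pos_of_le_one_of_nonpos hsξ (hs1 ξ hξ) (by linarith)
    have i1 : z ξ ^ q ≤ ε ^ q * s ξ ^ (α * q) := by
      rw [Real.rpow_mul hsξ.le, ← Real.mul_rpow hε0.le (Real.rpow_nonneg hsξ.le _)]
      exact Real.rpow_le_rpow (hz0 ξ hξ).le (by linarith) hq0.le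
    have i2 : L₁ ^ q * s ξ ^ (β * q) * s' ξ ≤ ε ^ q * s ξ ^ (α * q) := by
      refine le_trans ?_ i1
      rw [hzq ξ hξ, Real.rpow_mul hsξ.le, ← Real.mul_rpow hL₁.le (Real.rpow_nonneg hsξ.le _)]
      exact mul_le_mul_of_nonneg_right
        (Real.rpow_le_rpow (by positivity) (hd₁ ξ hξ) hq0.le) hs'ξ.le
    have e1 : T * s ξ ^ (α * q) = s ξ ^ γ * s ξ ^ (β * q) := by
      rw [hT, ← Real.rpow_add hsξ, ← Real.rpow_add hsξ]
      congr 1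
      linear_combination hαm
    have i3 : K * (ε ^ q)⁻¹ * T * s' ξ ≤ G ξ := by
      refine le_trans ?_ (hG ξ hξ)
      have hA := Real.rpow_pos_of_pos hsξ (α * q)
      refine le_of_mul_le_mul_right ?_ (mul_pos hεq hA)
      have i4 := mul_le_mul_of_nonneg_left i2
        (mul_nonneg hM.le (Real.rpow_nonneg hsξ.le γ))
      calc K * (ε ^ q)⁻¹ * T * s' ξ * (ε ^ q * s ξ ^ (α * q))
          = K * s' ξ * (T * s ξ ^ (α * q)) := by field_simp
        _ = M * s ξ ^ γ * (L₁ ^ q * s ξ ^ (β * q) * s' ξ) := by rw [e1, hK]; ring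
        _ ≤ _ := i4
    have i5 : κ ξ ≤ C₀ * T := (hκ ξ hξ).trans (le_mul_of_one_le_right hC₀ hT1)
    have i6 : (ε * α + C₀) * (T * s' ξ) < K * (ε ^ q)⁻¹ * (T * s' ξ) :=
      mul_lt_mul_of_pos_right hε (by positivity)
    have i7 := mul_le_mul_of_nonneg_right i5 hs'ξ.le
    nlinarith
  have hyl : Tendsto (fun ξ => ε * s ξ ^ α - z ξ) atBot (nhds 0) := by
    have h1 := ((hsl.rpow_const (p := α) (Or.inr hα0.le)).const_mul ε).sub hzl
    simpa [Real.zero_rpow hα0.ne'] using h1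
  have hzge : ∀ ξ ∈ Iio b, ε * s ξ ^ α ≤ z ξ := by
    intro ξ hξ
    by_contra! hlt
    have hB : 0 < (ε * s ξ ^ α - z ξ) / 2 := by linarith
    obtain ⟨a, ha, haξ⟩ :=
      ((hyl.eventually (ge_mem_nhds hB)).and (eventually_lt_atBot ξ)).exists
    have h := image_le_of_deriv_right_lt_deriv_boundary
      (f := fun ξ => ε * s ξ ^ α - z ξ) (a := a) (b := ξ)
      (B := fun _ => (ε * s ξ ^ α - z ξ) / 2) (B' := fun _ => 0)
      (fun x hx => (hy' x (hx.2.trans_lt hξ)).continuousAt.continuousWithinAt)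
      (fun x hx => (hy' x (hx.2.trans hξ)).hasDerivWithinAt)
      ha (fun x => hasDerivAt_const x _)
      (fun x hx hxB => hneg x (hx.2.trans hξ) (by linarith))
      (right_mem_Icc.2 haξ.le)
    linarith
  set σ := (γ - β + 1) / p with hσdef
  have hσ1 : σ < 1 := (div_lt_one hp0).2 hσ
  have hσeq : (α - β) * q = σ := by
    rw [hσdef, hα, hmdef, hq]
    field_simp
    ring
  set k := (ε / L₂) ^ q with hk
  have hk0 : 0 < k := Real.rpow_pos_of_pos (div_pos hε0 hL₂) q
  have hgrow : ∀ ξ ∈ Iio b, k * s ξ ^ σ ≤ s' ξ := by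
    intro ξ hξ
    have hsξ := hs0 ξ hξ
    have hs'ξ := hs'0 ξ hξ
    have i1 : ε * s ξ ^ α ≤ L₂ * s ξ ^ β * s' ξ ^ (p - 1) := by
      refine (hzge ξ hξ).trans ?_
      rw [hz ξ hξ]
      exact mul_le_mul_of_nonneg_right (hd₂ ξ hξ) (Real.rpow_nonneg hs'ξ.le _)
    have hA := Real.rpow_pos_of_pos hsξ β
    have i2 : ε / L₂ * s ξ ^ (α - β) ≤ s' ξ ^ (p - 1) := by
      rw [Real.rpow_sub hsξ, div_mul_div_comm, div_le_iff₀ (by positivity)]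
      linarith
    have i3 := Real.rpow_le_rpow
      (mul_nonneg (div_pos hε0 hL₂).le (Real.rpow_nonneg hsξ.le _)) i2 hq0.le
    rwa [Real.mul_rpow (div_pos hε0 hL₂).le (Real.rpow_nonneg hsξ.le _),
      ← Real.rpow_mul hsξ.le, ← Real.rpow_mul hs'ξ.le, hpq, Real.rpow_one, hσeq] at i3
  have hmono : MonotoneOn (fun ξ => s ξ ^ (1 - σ) - k * (1 - σ) * ξ) (Iio b) := by
    have hder : ∀ ξ ∈ Iio b, HasDerivAt (fun ξ => s ξ ^ (1 - σ) - k * (1 - σ) * ξ)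
        (s' ξ * (1 - σ) * s ξ ^ (1 - σ - 1) - k * (1 - σ) * 1) ξ := fun ξ hξ =>
      ((hs ξ hξ).rpow_const (Or.inl (hs0 ξ hξ).ne')).sub
        ((hasDerivAt_id ξ).const_mul (k * (1 - σ)))
    apply monotoneOn_of_hasDerivWithinAt_nonneg (convex_Iio b)
      (f' := fun ξ => s' ξ * (1 - σ) * s ξ ^ (1 - σ - 1) - k * (1 - σ) * 1)
    · exact fun ξ hξ => (hder ξ hξ).continuousAt.continuousWithinAt
    · intro ξ hξ
      rw [interior_Iio] at hξ
      exact (hder ξ hξ).hasDerivWithinAt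
    · intro ξ hξ
      rw [interior_Iio] at hξ
      have hsξ := hs0 ξ hξ
      have e1 : s ξ ^ σ * s ξ ^ (1 - σ - 1) = 1 := by
        rw [← Real.rpow_add hsξ]
        simp
      have i1 := mul_le_mul_of_nonneg_right (hgrow ξ hξ)
        (Real.rpow_nonneg hsξ.le (1 - σ - 1))
      rw [mul_assoc, e1] at i1
      nlinarith
  have hkσ : 0 < k * (1 - σ) := mul_pos hk0 (by linarith)
  obtain ⟨ξ, hξ1, hξ2⟩ : ∃ ξ, ξ < b - 1 ∧
      s (b - 1) ^ (1 - σ) < k * (1 - σ) * ((b - 1) - ξ) := by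
    have hP := Real.rpow_pos_of_pos (hs0 _ hmid) (1 - σ)
    refine ⟨b - 1 - (s (b - 1) ^ (1 - σ) / (k * (1 - σ)) + 1), ?_, ?_⟩
    · have : 0 < s (b - 1) ^ (1 - σ) / (k * (1 - σ)) := by positivity
      linarith
    · rw [sub_sub_cancel, mul_add, mul_div_cancel₀ _ hkσ.ne']
      linarith
  have hξb : ξ ∈ Iio b := hξ1.trans hmid
  have h := hmono hξb hmid hξ1.le
  have hP := Real.rpow_pos_of_pos (hs0 _ hξb) (1 - σ)
  simp only at h
  nlinarith

namespace IsTWSol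

variable {p θ c : ℝ} {D H h g u : ℝ → ℝ} {ξ : ℝ}

theorem isOpen_interior_values (hu : IsTWSol p c D h g u) : IsOpen {ξ | u ξ ∈ Ioo (0 : ℝ) 1} :=
  isOpen_Ioo.preimage hu.cont

theorem hasDerivAt (hu : IsTWSol p c D h g u) (hξ : u ξ ∈ Ioo (0 : ℝ) 1) :
    HasDerivAt u (deriv u ξ) ξ :=
  ((hu.smooth.contDiffAt (hu.isOpen_interior_values.mem_nhds hξ)).differentiableAt
    one_ne_zero).hasDerivAt

/-- The quantity `D(u)|u'|^{p-2}u' + c u + H(u)` is nonincreasing along the profile. -/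
theorem antitoneOn_flux_add (S : CombSetup p θ D H h g) (hu : IsTWSol p c D h g u) {J : Set ℝ}
    (hJ : Convex ℝ J) (hJu : ∀ ξ ∈ J, u ξ ∈ Ioo θ 1) :
    AntitoneOn (fun ξ => flux p D u ξ + c * u ξ + H (u ξ)) J := by
  have hder : ∀ ξ ∈ J, HasDerivAt (fun ξ => flux p D u ξ + c * u ξ + H (u ξ))
      (-(c + h (u ξ)) * deriv u ξ - g (u ξ) + c * deriv u ξ + h (u ξ) * deriv u ξ) ξ := by
    intro ξ hξ
    have h01 : u ξ ∈ Ioo (0 : ℝ) 1 := ⟨S.hθ0.trans (hJu ξ hξ).1, (hJu ξ hξ).2⟩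
    have hH : HasDerivAt H (h (u ξ)) (u ξ) :=
      (S.hHd _ (Ioo_subset_Icc_self h01)).hasDerivAt (Icc_mem_nhds h01.1 h01.2)
    exact ((hu.eqn ξ h01).add ((hu.hasDerivAt h01).const_mul c)).add
      (hH.comp ξ (hu.hasDerivAt h01))
  refine antitoneOn_of_hasDerivWithinAt_nonpos hJ
    (fun ξ hξ => (hder ξ hξ).continuousAt.continuousWithinAt)
    (fun ξ hξ => (hder ξ (interior_subset hξ)).hasDerivWithinAt) ?_
  intro ξ hξ
  have := S.hgpos _ (hJu ξ (interior_subset hξ))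
  linarith

/-- Where `u` takes values in `(θ, 1)` and larger values were taken before, `u` is strictly
decreasing. -/
theorem deriv_neg (S : CombSetup p θ D H h g) (hh0 : ∀ v ∈ Icc (0 : ℝ) 1, 0 ≤ h v) (hc : 0 < c)
    (hu : IsTWSol p c D h g u) {J : Set ℝ}
    (hJ : Convex ℝ J) (hJo : IsOpen J) (hJu : ∀ ξ ∈ J, u ξ ∈ Ioo θ 1)
    (hback : ∀ ξ ∈ J, ∃ η ∈ J, η < ξ ∧ u ξ ≤ u η) : ∀ ξ ∈ J, deriv u ξ < 0 := by
  have h01 : ∀ ξ ∈ J, u ξ ∈ Ioo (0 : ℝ) 1 := fun ξ hξ =>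
    ⟨S.hθ0.trans (hJu ξ hξ).1, (hJu ξ hξ).2⟩
  have hHmono : MonotoneOn H (Icc 0 1) :=
    monotoneOn_of_hasDerivWithinAt_nonneg (convex_Icc 0 1)
      (fun v hv => (S.hHd v hv).continuousWithinAt)
      (fun v hv => (S.hHd v (interior_subset hv)).mono interior_subset)
      (fun v hv => hh0 v (interior_subset hv))
  have hW := hu.antitoneOn_flux_add S hJ hJu
  have hle : ∀ ξ ∈ J, deriv u ξ ≤ 0 := by
    intro ξ hξ
    by_contra! hpos
    obtain ⟨η, hη, hηξ, hηu⟩ := hback ξ hξ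
    have hsub : Icc η ξ ⊆ J := hJ.ordConnected.out hη hξ
    obtain ⟨x, hx, hmin⟩ := isCompact_Icc.exists_isMinOn (nonempty_Icc.2 hηξ.le)
      hu.cont.continuousOn
    have hlt : u x < u ξ := by
      by_contra! hge
      have hev : ∀ᶠ t in nhdsWithin ξ (Iio ξ), u t < u ξ := by
        have h1 := (hasDerivAt_iff_tendsto_slope.1 (hu.hasDerivAt (h01 ξ hξ))).eventually
          (lt_mem_nhds hpos)
        filter_upwards [h1.filter_mono (nhdsWithin_mono ξ fun t (ht : t < ξ) => ht.ne),
          self_mem_nhdsWithin] with t ht htξ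
        rw [slope_def_field] at ht
        have htξ' : t - ξ < 0 := sub_neg.2 htξ
        by_contra! hcon
        exact absurd ht (not_lt.2 (div_nonpos_of_nonneg_of_nonpos (by linarith) htξ'.le))
      obtain ⟨t, ht, htη⟩ := (hev.and (Ioo_mem_nhdsLT hηξ)).exists
      have hxt : u x ≤ u t := hmin (Ioo_subset_Icc_self htη)
      linarith
    have hxη : η < x := lt_of_le_of_ne hx.1 (by rintro rfl; linarith)
    have hxξ : x < ξ := lt_of_le_of_ne hx.2 (by rintro rfl; linarith)
    have hd : deriv u x = 0 := (hmin.isLocalMin (Icc_mem_nhds hxη hxξ)).deriv_eq_zero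
    have h1 := hW (hsub hx) hξ hxξ.le
    have h2 := hHmono (Ioo_subset_Icc_self (h01 x (hsub hx)))
      (Ioo_subset_Icc_self (h01 ξ hξ)) hlt.le
    have h3 : 0 < flux p D u ξ := by
      unfold flux
      have := S.hDpos _ (h01 ξ hξ)
      have := Real.rpow_pos_of_pos (abs_pos.2 hpos.ne') (p - 2)
      positivity
    have h4 : flux p D u x = 0 := by simp [flux, hd]
    simp only [h4] at h1
    nlinarith
  intro ξ hξ
  refine lt_of_le_of_ne (hle ξ hξ) fun hd => ?_
  have hmax : IsLocalMax (flux p D u) ξ := by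
    filter_upwards [hJo.mem_nhds hξ] with t ht
    have h1 : flux p D u ξ = 0 := by simp [flux, hd]
    rw [h1]
    exact mul_nonpos_of_nonneg_of_nonpos (S.hDpos _ (h01 t ht)).le
      (mul_nonpos_of_nonneg_of_nonpos (Real.rpow_nonneg (abs_nonneg _) _) (hle t ht))
  have h1 := hmax.hasDerivAt_eq_zero (hu.eqn ξ (h01 ξ hξ))
  have := S.hgpos _ (hJu ξ hξ)
  rw [hd] at h1
  linarith

theorem neg_flux_eq (hu' : deriv u ξ < 0) :
    -flux p D u ξ = D (u ξ) * (-deriv u ξ) ^ (p - 1) := by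
  have h1 : 0 < -deriv u ξ := by linarith
  rw [flux, abs_of_neg hu', show p - 1 = (p - 2) + 1 by ring, Real.rpow_add_one h1.ne']
  ring

end IsTWSol

/-- Asymptotics near 1, first regime. -/
theorem stmt17 (p θ c β γ : ℝ) (D H h g u : ℝ → ℝ) (S : CombSetup p θ D H h g)
    (hh0 : ∀ v ∈ Icc (0 : ℝ) 1, 0 ≤ h v)
    (hHpos : ∀ v ∈ Ioc (0 : ℝ) 1, 0 < H v)
    (hc : 0 < c) (hu : IsTWSol p c D h g u)
    (hγ : 0 < γ)
    (hDlim : ∃ L > (0 : ℝ),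
      Tendsto (fun v => D v / (1 - v) ^ β) (nhdsWithin 1 (Iio (1 : ℝ))) (nhds L))
    (hglim : ∃ M > (0 : ℝ),
      Tendsto (fun v => g v / (1 - v) ^ γ) (nhdsWithin 1 (Iio (1 : ℝ))) (nhds M))
    (h1 : -1 < γ + β / (p - 1)) (h2 : γ + β / (p - 1) ≤ 1 / (p - 1)) :
    ((γ - β + 1) / p < 1 → ∃ ξ : ℝ, u ξ = 1) ∧
    (1 ≤ (γ - β + 1) / p → ∀ ξ : ℝ, u ξ < 1) := by
  obtain ⟨L, hL, hDl⟩ := hDlim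
  obtain ⟨M, hM, hgl⟩ := hglim
  have hp0 : 0 < p := by linarith [S.hp]
  obtain ⟨r, hr1, hr⟩ := mem_nhdsLT_iff_exists_Ioo_subset.1
    (((eventually_two_sided_rpow_bound hL hDl).and
      (eventually_two_sided_rpow_bound hM hgl)).and (Ioo_mem_nhdsLT S.hθ1))
  have hr1 : r < 1 := hr1
  obtain ⟨x₀, -, hx₀⟩ := isCompact_Icc.exists_isMaxOn (nonempty_Icc.2 zero_le_one) S.hh
  have hsmem : ∀ ξ, r < u ξ → u ξ < 1 → u ξ ∈ Ioo θ 1 ∧ u ξ ∈ Ioo (0 : ℝ) 1 := fun ξ h3 h4 =>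
    have h5 := (hr ⟨h3, h4⟩).2
    ⟨h5, S.hθ0.trans h5.1, h5.2⟩
  constructor
  · intro hσ
    by_contra! hne
    have hlt : ∀ ξ, u ξ < 1 := fun ξ => lt_of_le_of_ne (hu.mem ξ).2 (hne ξ)
    obtain ⟨b, hb⟩ := eventually_atBot.1 (hu.lim_bot.eventually (lt_mem_nhds hr1))
    have hJ : ∀ ξ ∈ Iio b, u ξ ∈ Ioo r 1 := fun ξ hξ => ⟨hb ξ (le_of_lt hξ), hlt ξ⟩
    have hmem := fun ξ hξ => hsmem ξ (hJ ξ hξ).1 (hJ ξ hξ).2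
    have hder := hu.deriv_neg S hh0 hc (convex_Iio b) isOpen_Iio (fun ξ hξ => (hmem ξ hξ).1)
      (fun ξ hξ => by
        obtain ⟨η, h3, h4⟩ := ((hu.lim_bot.eventually (lt_mem_nhds (hlt ξ))).and
          (eventually_lt_atBot ξ)).exists
        exact ⟨η, h4.trans hξ, h4, h3.le⟩)
    have hfl : Tendsto (fun ξ => -flux p D u ξ) atBot (nhds 0) := by
      rw [Metric.tendsto_nhds]
      intro ε hε
      obtain ⟨δ, hδ, hfd⟩ := hu.flux_to1 ε hε
      filter_upwards [hu.lim_bot.eventually (lt_mem_nhds (sub_lt_self 1 hδ)),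
        eventually_lt_atBot b] with ξ h3 h4
      simpa using hfd ξ (hmem ξ h4).2 h3
    refine not_departure_at_bot (b := b) (s := fun ξ => 1 - u ξ) (z := fun ξ => -flux p D u ξ)
      (s' := fun ξ => -deriv u ξ) (d := fun ξ => D (u ξ)) (G := fun ξ => g (u ξ))
      (κ := fun ξ => c + h (u ξ)) (C₀ := c + max (h x₀) 0) S.hp (half_pos hL) (half_pos hM) h1 h2
      ((div_lt_one hp0).1 hσ) (by simpa using hu.lim_bot.const_sub 1) hfl
      (fun ξ hξ => (hu.hasDerivAt (hmem ξ hξ).2).const_sub 1)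
      (fun ξ hξ => sub_pos.2 (hlt ξ)) (fun ξ hξ => by linarith [(hu.mem ξ).1])
      (fun ξ hξ => neg_pos.2 (hder ξ hξ)) (fun ξ hξ => IsTWSol.neg_flux_eq (hder ξ hξ))
      (fun ξ hξ => (hu.eqn ξ (hmem ξ hξ).2).neg.congr_deriv (by ring))
      (by positivity) (fun ξ hξ => ?_)
      (fun ξ hξ => (hr (hJ ξ hξ)).1.1.1) (fun ξ hξ => (hr (hJ ξ hξ)).1.1.2)
      (fun ξ hξ => (hr (hJ ξ hξ)).1.2.1)
    have h3 : h (u ξ) ≤ h x₀ := hx₀ (hu.mem ξ)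
    have h4 := le_max_left (h x₀) 0
    linarith
  · intro hσ
    by_contra! hex
    obtain ⟨ξ₀, hξ₀⟩ := hex
    have hcl : IsClosed {ξ | u ξ = 1} := isClosed_eq hu.cont continuous_const
    have hbdd : BddAbove {ξ | u ξ = 1} := by
      obtain ⟨B, hB⟩ := eventually_atTop.1 (hu.lim_top.eventually (gt_mem_nhds one_pos))
      refine ⟨B, fun ξ (hξ : u ξ = 1) => ?_⟩
      by_contra! hcon
      exact (hB ξ hcon.le).ne hξ
    set a := sSup {ξ | u ξ = 1} with ha
    have hua : u a = 1 := hcl.csSup_mem ⟨ξ₀, le_antisymm (hu.mem ξ₀).2 hξ₀⟩ hbdd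
    have hlt : ∀ ξ, a < ξ → u ξ < 1 := fun ξ hξ =>
      lt_of_le_of_ne (hu.mem ξ).2 fun h3 => not_lt.2 (le_csSup hbdd h3) hξ
    obtain ⟨b, hab, hb⟩ := mem_nhdsGT_iff_exists_Ioo_subset.1
      ((hu.cont.continuousAt.eventually (lt_mem_nhds (hua.symm ▸ hr1))).filter_mono
        nhdsWithin_le_nhds : ∀ᶠ ξ in nhdsWithin a (Ioi a), r < u ξ)
    have hJ : ∀ ξ ∈ Ioo a b, u ξ ∈ Ioo r 1 := fun ξ hξ => ⟨hb hξ, hlt ξ hξ.1⟩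
    have hmem := fun ξ hξ => hsmem ξ (hJ ξ hξ).1 (hJ ξ hξ).2
    have hder := hu.deriv_neg S hh0 hc (convex_Ioo a b) isOpen_Ioo (fun ξ hξ => (hmem ξ hξ).1)
      (fun ξ hξ => by
        have h3 : ∀ᶠ η in nhdsWithin a (Ioi a), u ξ < u η :=
          (hu.cont.continuousAt.eventually (lt_mem_nhds (hua.symm ▸ hlt ξ hξ.1))).filter_mono
            nhdsWithin_le_nhds
        obtain ⟨η, h4, h5⟩ := (h3.and (Ioo_mem_nhdsGT hξ.1)).exists
        exact ⟨η, ⟨h5.1, h5.2.trans hξ.2⟩, h5.2, h4.le⟩)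
    set w := fun ξ => if u ξ ∈ Ioo (0 : ℝ) 1 then flux p D u ξ else 0 with hw
    have hweq : ∀ ξ ∈ Ioo a b, w ξ = flux p D u ξ := fun ξ hξ => if_pos (hmem ξ hξ).2
    exact not_departure_at_finite_time (a := a) (b := b) (s := fun ξ => 1 - u ξ)
      (z := fun ξ => -w ξ)
      (s' := fun ξ => -deriv u ξ) (d := fun ξ => D (u ξ)) (G := fun ξ => g (u ξ))
      (κ := fun ξ => c + h (u ξ)) S.hp hab (half_pos hL) (mul_pos two_pos hM) h1
      ((one_le_div hp0).1 hσ) (continuous_const.sub hu.cont).continuousOn hu.flux_cont.neg.continuousOn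
      (by simp [hua]) (by simp [hw, hua])
      (fun ξ hξ => (hu.hasDerivAt (hmem ξ hξ).2).const_sub 1)
      (fun ξ hξ => sub_pos.2 (hlt ξ hξ.1)) (fun ξ hξ => by linarith [(hu.mem ξ).1])
      (fun ξ hξ => neg_pos.2 (hder ξ hξ))
      (fun ξ hξ => by rw [hweq ξ hξ]; exact IsTWSol.neg_flux_eq (hder ξ hξ))
      (fun ξ hξ => (((hu.eqn ξ (hmem ξ hξ).2).neg.congr_deriv (by ring)).congr_of_eventuallyEq
        (by
          filter_upwards [isOpen_Ioo.mem_nhds hξ] with t ht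
          simp [hweq t ht])))
      (fun ξ hξ => by
        have := hh0 _ (hu.mem ξ)
        linarith)
      (fun ξ hξ => (hr (hJ ξ hξ)).1.1.1) (fun ξ hξ => (hr (hJ ξ hξ)).1.1.2)
      (fun ξ hξ => (S.hgpos _ (hmem ξ hξ).1).le)
      (fun ξ hξ => (hr (hJ ξ hξ)).1.2.2)
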